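/- The construction theorem: under its hypotheses (coquasitriangular H, left coideal subalgebra X with invertibility-closure property, comodule bases e^i and b^i in X, covariant algebra endomorphism ν of X, invertible matrix χ^{ij} = χ^i(e^j) with χ^i(a) = r(b^i ⊗ ν(a)) − ε(b^i)ε(a)), there exists a unique (up to isomorphism) covariant first order differential calculus (Γ, d) on X in which every element of Γ is uniquely Σ_i a_i d e^i and d a = Σ_i ∂_i(a) d e^i with ∂_i(a) = a_{(1)} χ^k(a_{(2)}) (χ^{-1})_{jk} S(π^j_i). -/

import Mathlib

open TensorProduct MulOpposite

/-- A covariant first order differential calculus on a left coideal subalgebra `X ⊆ H`,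
satisfying the freeness condition with respect to `e : Fin M → X`. -/
structure CovCalc {H : Type} [Ring H] [HopfAlgebra ℂ H] (X : Subalgebra ℂ H)
    (comulX : X →ₗ[ℂ] H ⊗[ℂ] X) {M : ℕ} (e : Fin M → X) where
  Γ : Type
  [grp : AddCommGroup Γ]
  [modC : Module ℂ Γ]
  [modL : Module X Γ]
  [modR : Module Xᵐᵒᵖ Γ]
  [comm : SMulCommClass X Xᵐᵒᵖ Γ]
  [tower : IsScalarTower ℂ X Γ]
  d : X →ₗ[ℂ] Γ
  leibniz : ∀ a b : X, d (a * b) = a • d b + op b • d a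
  spanning : Submodule.span ℂ {x : Γ | ∃ a b : X, x = a • d b} = ⊤
  free : ∀ ω : Γ, ∃! c : Fin M → X, ω = ∑ i, c i • d (e i)
  covariant : ∃ ΔΓ : Γ →ₗ[ℂ] H ⊗[ℂ] Γ,
    ∀ (a b : X) (ι κ : Type) (_ : Fintype ι) (_ : Fintype κ)
      (a1 : ι → H) (a2 : ι → X) (b1 : κ → H) (b2 : κ → X),
      comulX a = ∑ t, a1 t ⊗ₜ[ℂ] a2 t → comulX b = ∑ s, b1 s ⊗ₜ[ℂ] b2 s →
      ΔΓ (a • d b) = ∑ t, ∑ s, (a1 t * b1 s) ⊗ₜ[ℂ] (a2 t • d (b2 s))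

attribute [instance] CovCalc.grp CovCalc.modC CovCalc.modL CovCalc.modR
  CovCalc.comm CovCalc.tower

/-- Isomorphism of two such calculi. -/
def CovCalc.Iso {H : Type} [Ring H] [HopfAlgebra ℂ H] {X : Subalgebra ℂ H}
    {comulX : X →ₗ[ℂ] H ⊗[ℂ] X} {M : ℕ} {e : Fin M → X}
    (c c' : CovCalc X comulX e) : Prop :=
  ∃ φ : c.Γ ≃ₗ[ℂ] c'.Γ,
    (∀ a : X, φ (c.d a) = c'.d a) ∧
    (∀ (a : X) (x : c.Γ), φ (a • x) = a • φ x) ∧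
    (∀ (a : X) (x : c.Γ), φ (op a • x) = op a • φ x)

/-!
Write `L` for the representation `L(a)^j_k = r(ψ^k_j ⊗ ν(a))` of `X`, put `F(a) = a₍₁₎ L(a₍₂₎)` and
let `β` be the row vector of the counits `ε(b^j)`. The row vector `D(a)` with entries
`a₍₁₎ χ^k(a₍₂₎)` equals `β F(a) - a β`, an inner twisted derivation, so that
`D(a b) = a D(b) + D(a) F(b)`. With `P` the matrix with rows `D(e^l)` and `Q = P⁻¹`, the row vector
`D(a) Q` is the vector of the `∂_i(a)`; it sends `e^l` to the `l`-th unit vector, and the free left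
module on the `d e^l`, with `b` acting from the right by `P F(b) Q`, is the desired calculus.

The entries of `D(a)` and `Q` need not lie in `X`, but those of `D(a) ψᵀ` do, because the r-form
moves the coefficients of `ψ` past `a`. The r-form also makes `ψᵀ` invertible: it intertwines `ψ`
with its double contragredient. Hence the closure property places `(ψᵀ)⁻¹ Q`, the inverse of `P ψᵀ`,
in `X`, and with it `D(a) Q`. Since `D` intertwines the coactions, the rows of `P` transform under
`π`, and covariance follows by cancelling `1 ⊗ P`.

A free calculus is determined by the coefficients of its differential, since the Leibniz rule
expresses the right action on `d e^l` through `d`.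
-/

section MatrixCorepresentation

open scoped Matrix

variable {R H n : Type*} [Fintype n] [DecidableEq n]

/-- A matrix corepresentation: `Δ(u i j) = ∑ k, u i k ⊗ u k j` and `ε(u i j) = δ i j`. -/
structure IsMatrixCorep (R : Type*) [CommSemiring R] [AddCommMonoid H] [Module R H]
    [CoalgebraStruct R H] (u : Matrix n n H) : Prop where
  comul_apply (i j : n) : Coalgebra.comul (R := R) (u i j) = ∑ k, u i k ⊗ₜ[R] u k j
  counit_apply (i j : n) : Coalgebra.counit (R := R) (u i j) = (1 : Matrix n n R) i j

namespace IsMatrixCorep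

variable [CommSemiring R] [Semiring H]

theorem mapMatrix_comul [Bialgebra R H] {u : Matrix n n H} (hu : IsMatrixCorep R u) :
    (Bialgebra.comulAlgHom R H).mapMatrix u =
      (Algebra.TensorProduct.includeLeft (S := R)).mapMatrix u *
        Algebra.TensorProduct.includeRight.mapMatrix u := by
  ext i j
  simp [Matrix.mul_apply, hu.comul_apply]

variable [HopfAlgebra R H] {u : Matrix n n H}

theorem antipode_mul (hu : IsMatrixCorep R u) : u.map (HopfAlgebra.antipode R) * u = 1 := by
  ext i j
  have h := HopfAlgebra.mul_antipode_rTensor_comul_apply (R := R) (u i j)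
  rw [hu.comul_apply, hu.counit_apply] at h
  simpa [Matrix.mul_apply, Matrix.one_apply, apply_ite (algebraMap R H)] using h

theorem mul_antipode (hu : IsMatrixCorep R u) : u * u.map (HopfAlgebra.antipode R) = 1 := by
  ext i j
  have h := HopfAlgebra.mul_antipode_lTensor_comul_apply (R := R) (u i j)
  rw [hu.comul_apply, hu.counit_apply] at h
  simpa [Matrix.mul_apply, Matrix.one_apply, apply_ite (algebraMap R H)] using h

theorem isUnit (hu : IsMatrixCorep R u) : IsUnit u :=
  ⟨⟨u, _, hu.mul_antipode, hu.antipode_mul⟩, rfl⟩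

theorem mapMatrix_comul_antipode (hu : IsMatrixCorep R u) :
    (Bialgebra.comulAlgHom R H).mapMatrix (u.map (HopfAlgebra.antipode R)) =
      Algebra.TensorProduct.includeRight.mapMatrix (u.map (HopfAlgebra.antipode R)) *
        (Algebra.TensorProduct.includeLeft (S := R)).mapMatrix
          (u.map (HopfAlgebra.antipode R)) := by
  refine left_inv_eq_right_inv (a := (Bialgebra.comulAlgHom R H).mapMatrix u) ?_ ?_
  · rw [← map_mul, hu.antipode_mul, map_one]
  · rw [hu.mapMatrix_comul, mul_assoc, ← mul_assoc (Algebra.TensorProduct.includeRight.mapMatrix u),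
      ← map_mul, hu.mul_antipode, map_one, one_mul, ← map_mul, hu.mul_antipode, map_one]

theorem contragredient (hu : IsMatrixCorep R u) :
    IsMatrixCorep R (u.map (HopfAlgebra.antipode R))ᵀ where
  comul_apply i j := by
    have h := congrFun₂ hu.mapMatrix_comul_antipode j i
    simpa [Matrix.mul_apply] using h
  counit_apply i j := by
    simp [hu.counit_apply, Matrix.one_apply, eq_comm]

end IsMatrixCorep

end MatrixCorepresentation

section RForm

open scoped Matrix

variable {R H : Type*} [CommRing R] [Ring H]

/-- The half of the axioms of a universal r-form that makes `r(u k j ⊗ ·)` a representation of `H`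
for every matrix corepresentation `u`, together with the almost-commutativity of `H`. -/
structure IsRightRForm [Bialgebra R H] (r : H →ₗ[R] H →ₗ[R] R) : Prop where
  comm : ∀ (a b : H) (ι κ : Type) (_ : Fintype ι) (_ : Fintype κ)
    (a1 a2 : ι → H) (b1 b2 : κ → H),
    Coalgebra.comul (R := R) a = ∑ t, a1 t ⊗ₜ[R] a2 t →
    Coalgebra.comul (R := R) b = ∑ s, b1 s ⊗ₜ[R] b2 s →
    ∑ t, ∑ s, r (a1 t) (b1 s) • (a2 t * b2 s) = ∑ t, ∑ s, r (a2 t) (b2 s) • (b1 s * a1 t)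
  mul_right : ∀ (a b c : H) (ι : Type) (_ : Fintype ι) (a1 a2 : ι → H),
    Coalgebra.comul (R := R) a = ∑ t, a1 t ⊗ₜ[R] a2 t →
    r a (b * c) = ∑ t, r (a1 t) c * r (a2 t) b
  one_right : ∀ a : H, r a 1 = Coalgebra.counit (R := R) a

variable {n : Type} [Fintype n] [DecidableEq n]

/-- For coefficients `u` of a comodule and `v` of its dual, the scalars
`∑ p, r(u i p ⊗ v l p)` which intertwine `u` with its double contragredient. -/
def rFormTrace [Bialgebra R H] (r : H →ₗ[R] H →ₗ[R] R) (u v : Matrix n n H) : Matrix n n R :=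
  Matrix.of fun l i => ∑ p, r (u i p) (v l p)

namespace IsRightRForm

theorem mul_rFormTrace_mul_transpose [Bialgebra R H] {r : H →ₗ[R] H →ₗ[R] R}
    (hr : IsRightRForm r) {u v : Matrix n n H} (hu : IsMatrixCorep R u) (hv : IsMatrixCorep R v)
    (huv : u * vᵀ = 1) :
    v * (rFormTrace r u v).map (algebraMap R H) * uᵀ = (rFormTrace r u v).map (algebraMap R H) := by
  ext l i
  have hcomm (j : n) := hr.comm (u i j) (v l j) n n _ _ _ _ _ _ (hu.comul_apply i j)
    (hv.comul_apply l j)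
  have huv' (p m : n) : ∑ j, u p j * v m j = if p = m then 1 else 0 := by
    rw [← Matrix.one_apply, ← huv, Matrix.mul_apply]
    rfl
  calc (v * (rFormTrace r u v).map (algebraMap R H) * uᵀ) l i
      = ∑ j, ∑ p, ∑ m, r (u p j) (v m j) • (v l m * u i p) := by
        simp only [rFormTrace, Matrix.mul_apply, Matrix.transpose_apply, Matrix.map_apply,
          Matrix.of_apply, ← Algebra.commutes, ← Algebra.smul_def, Finset.sum_smul, Finset.sum_mul,
          smul_mul_assoc]
        rw [Finset.sum_comm_cycle]
    _ = ∑ j, ∑ p, ∑ m, r (u i p) (v l m) • (u p j * v m j) := by simp only [hcomm]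
    _ = ∑ p, ∑ m, r (u i p) (v l m) • ∑ j, u p j * v m j := by
        rw [Finset.sum_comm]
        refine Finset.sum_congr rfl fun p _ => ?_
        rw [Finset.sum_comm]
        simp only [Finset.smul_sum]
    _ = (rFormTrace r u v).map (algebraMap R H) l i := by
        simp [huv', rFormTrace, Algebra.algebraMap_eq_smul_one]

variable [HopfAlgebra R H] {r : H →ₗ[R] H →ₗ[R] R} {u : Matrix n n H}

theorem isUnit_rFormTrace (hr : IsRightRForm r) (hu : IsMatrixCorep R u) :
    IsUnit (rFormTrace r u (u.map (HopfAlgebra.antipode R))ᵀ) := by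
  set v := (u.map (HopfAlgebra.antipode R))ᵀ
  set w := v.map (HopfAlgebra.antipode R)
  set B := rFormTrace r u v
  have hwv : w * v = 1 := hu.contragredient.antipode_mul
  have hvu : vᵀ * u = 1 := hu.antipode_mul
  have hwB : w * B.map (algebraMap R H) = B.map (algebraMap R H) * uᵀ := by
    calc w * B.map (algebraMap R H)
        = w * (v * B.map (algebraMap R H) * uᵀ) := by
          rw [hr.mul_rFormTrace_mul_transpose hu hu.contragredient hu.mul_antipode]
      _ = B.map (algebraMap R H) * uᵀ := by rw [← mul_assoc, ← mul_assoc, hwv, one_mul]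
  have hwB' (j i : n) : ∑ l, B l i • w j l = ∑ q, B j q • u i q := by
    simpa only [Matrix.mul_apply, Matrix.map_apply, Matrix.transpose_apply, ← Algebra.commutes,
      ← Algebra.smul_def] using congrFun₂ hwB j i
  have hvu' (p k : n) : ∑ j, v j p * u j k = (1 : Matrix n n H) p k := by
    simp [← hvu, Matrix.mul_apply]
  refine IsUnit.of_mul_eq_one_right (Matrix.of fun k l => ∑ j, r (w j l) (u j k)) ?_
  ext k i
  calc _ = ∑ j, r (∑ l, B l i • w j l) (u j k) := by
          simp only [Matrix.mul_apply, Matrix.of_apply, Finset.sum_mul, map_sum, map_smul,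
            LinearMap.sum_apply, LinearMap.smul_apply, smul_eq_mul, mul_comm (B _ _)]
          exact Finset.sum_comm
    _ = ∑ j, ∑ q, r (u i q) (u j k) * ∑ p, r (u q p) (v j p) := by
          simp only [hwB', map_sum, map_smul, LinearMap.sum_apply, LinearMap.smul_apply,
            smul_eq_mul, mul_comm (B _ _)]
          rfl
    _ = ∑ p, r (u i p) (∑ j, v j p * u j k) := by
          simp only [map_sum, hr.mul_right _ _ _ n _ _ _ (hu.comul_apply i _), Finset.mul_sum]
          rw [Finset.sum_comm_cycle]
    _ = r (u i k) 1 := by simp [hvu', Matrix.one_apply, apply_ite]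
    _ = (1 : Matrix n n R) k i := by
          rw [hr.one_right, hu.counit_apply, Matrix.one_apply, Matrix.one_apply]
          simp only [eq_comm]

theorem isUnit_transpose (hr : IsRightRForm r) (hu : IsMatrixCorep R u) : IsUnit uᵀ := by
  have hB := (hr.isUnit_rFormTrace hu).map (algebraMap R H).mapMatrix
  rw [RingHom.mapMatrix_apply] at hB
  have h := hr.mul_rFormTrace_mul_transpose hu hu.contragredient hu.mul_antipode
  rw [← (hu.contragredient.isUnit.mul hB).unit.isUnit_units_mul, IsUnit.unit_spec, h]
  exact hB

end IsRightRForm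

end RForm

section LeftCoideal

variable {R H : Type*} [CommRing R] [Ring H] [Bialgebra R H] {X : Subalgebra R H}

/-- `δ : X → H ⊗ X` is a restriction of the comultiplication, so that `X` is a left coideal
subalgebra of `H`. -/
def IsLeftCoideal (X : Subalgebra R H) (δ : X →ₗ[R] H ⊗[R] X) : Prop :=
  ∀ a : X, TensorProduct.map LinearMap.id X.val.toLinearMap (δ a) = Coalgebra.comul (R := R) (a : H)

/-- The map `a ↦ φ(a₍₂₎) a₍₁₎` attached to a functional `φ` on a left comodule. -/
def slice {V : Type*} [AddCommGroup V] [Module R V] (δ : V →ₗ[R] H ⊗[R] V) (φ : V →ₗ[R] R) :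
    V →ₗ[R] H :=
  (TensorProduct.rid R H).toLinearMap ∘ₗ φ.lTensor H ∘ₗ δ

theorem slice_apply_of_eq_sum {V : Type*} [AddCommGroup V] [Module R V] {δ : V →ₗ[R] H ⊗[R] V}
    (φ : V →ₗ[R] R) {ι : Type*} [Fintype ι] {a : V} {h : ι → H} {x : ι → V}
    (ha : δ a = ∑ t, h t ⊗ₜ[R] x t) : slice δ φ a = ∑ t, φ (x t) • h t := by
  simp [slice, ha]

namespace IsLeftCoideal

variable {δ : X →ₗ[R] H ⊗[R] X}

theorem map_val_apply (hδ : IsLeftCoideal X δ) (a : X) :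
    Algebra.TensorProduct.map (AlgHom.id R H) X.val (δ a) = Coalgebra.comul (R := R) (a : H) :=
  hδ a

theorem slice_counit (hδ : IsLeftCoideal X δ) (a : X) :
    slice δ (Coalgebra.counit ∘ₗ X.val.toLinearMap) a = (a : H) := by
  have h := Coalgebra.lTensor_counit_comul (R := R) (a : H)
  rw [← hδ a, ← LinearMap.lTensor_def, ← LinearMap.comp_apply, ← LinearMap.lTensor_comp] at h
  simp [slice, h]

variable [Module.Flat R H]

theorem injective_lTensor_val (X : Subalgebra R H) :
    Function.Injective (X.val.toLinearMap.lTensor H) :=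
  Module.Flat.lTensor_preserves_injective_linearMap _ Subtype.val_injective

theorem injective_map_val (X : Subalgebra R H) :
    Function.Injective (Algebra.TensorProduct.map (AlgHom.id R H) X.val) :=
  injective_lTensor_val X

/-- The coaction of a left coideal subalgebra as an algebra homomorphism. -/
noncomputable def coactionAlgHom (hδ : IsLeftCoideal X δ) : X →ₐ[R] H ⊗[R] X :=
  AlgHom.ofLinearMap δ
    (injective_map_val X <| by simp [hδ.map_val_apply])
    (fun a b => injective_map_val X <| by simp [hδ.map_val_apply])

theorem coassoc (hδ : IsLeftCoideal X δ) (a : X) :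
    TensorProduct.assoc R H H X ((Coalgebra.comul (R := R)).rTensor X (δ a)) =
      δ.lTensor H (δ a) := by
  have hδ' : X.val.toLinearMap.lTensor H ∘ₗ δ = Coalgebra.comul ∘ₗ X.val.toLinearMap :=
    LinearMap.ext hδ
  have hassoc (z : H ⊗[R] X) : (X.val.toLinearMap.lTensor H).lTensor H
      (TensorProduct.assoc R H H X ((Coalgebra.comul (R := R)).rTensor X z)) =
        TensorProduct.assoc R H H H ((Coalgebra.comul (R := R)).rTensor H
          (X.val.toLinearMap.lTensor H z)) := by
    rw [← LinearMap.comp_apply (LinearMap.rTensor H _), LinearMap.rTensor_comp_lTensor,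
      ← LinearMap.lTensor_comp_rTensor, LinearMap.comp_apply, LinearMap.lTensor_tensor]
    simp
  refine Module.Flat.lTensor_preserves_injective_linearMap _ (injective_lTensor_val X) ?_
  calc _ = TensorProduct.assoc R H H H ((Coalgebra.comul (R := R)).rTensor H
            (Coalgebra.comul (R := R) (a : H))) := by rw [hassoc, ← hδ]; rfl
    _ = (Coalgebra.comul ∘ₗ X.val.toLinearMap).lTensor H (δ a) := by
        rw [Coalgebra.coassoc_apply, ← hδ, LinearMap.lTensor_comp]; rfl
    _ = _ := by rw [← hδ', LinearMap.lTensor_comp]; rfl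

theorem comul_slice (hδ : IsLeftCoideal X δ) (φ : X →ₗ[R] R) (a : X) :
    Coalgebra.comul (R := R) (slice δ φ a) = (slice δ φ).lTensor H (δ a) := by
  have h (z : H ⊗[R] X) : Coalgebra.comul (R := R) (TensorProduct.rid R H (φ.lTensor H z)) =
      ((TensorProduct.rid R H).toLinearMap ∘ₗ φ.lTensor H).lTensor H
        (TensorProduct.assoc R H H X ((Coalgebra.comul (R := R)).rTensor X z)) := by
    induction z with
    | zero => simp
    | add z w hz hw => simp [hz, hw]
    | tmul y x =>
      suffices ∀ w : H ⊗[R] H, φ x • w = ((TensorProduct.rid R H).toLinearMap ∘ₗ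
          φ.lTensor H).lTensor H (TensorProduct.assoc R H H X (w ⊗ₜ x)) by simp [← this]
      intro w
      induction w with
      | zero => simp
      | add w w' hw hw' => simp only [smul_add, hw, hw', TensorProduct.add_tmul, map_add]
      | tmul y z => simp
  calc _ = _ := h (δ a)
    _ = _ := by rw [hδ.coassoc, ← LinearMap.comp_apply, ← LinearMap.lTensor_comp]; rfl

end IsLeftCoideal

end LeftCoideal

section InnerDerivation

open scoped Matrix

variable {R H : Type*} [CommRing R] [Ring H] [Bialgebra R H] {X : Subalgebra R H}
  {δ : X →ₗ[R] H ⊗[R] X} {r : H →ₗ[R] H →ₗ[R] R} {ν : X →ₐ[R] X} {n : Type}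

/-- The functional `χ(a) = r(b ⊗ ν(a)) - ε(b) ε(a)` on `X`. -/
noncomputable def rFunctional (r : H →ₗ[R] H →ₗ[R] R) (ν : X →ₐ[R] X) (b : X) : X →ₗ[R] R :=
  r b ∘ₗ X.val.toLinearMap ∘ₗ ν.toLinearMap -
    Coalgebra.counit (R := R) (b : H) • (Coalgebra.counit ∘ₗ X.val.toLinearMap)

/-- The tuple `a ↦ a₍₁₎ χ^k(a₍₂₎)` of partial derivatives before normalization. -/
noncomputable def rDerivation (δ : X →ₗ[R] H ⊗[R] X) (r : H →ₗ[R] H →ₗ[R] R) (ν : X →ₐ[R] X)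
    (b : n → X) : X →ₗ[R] n → H :=
  LinearMap.pi fun k => slice δ (rFunctional r ν (b k))

namespace IsLeftCoideal

theorem rDerivation_apply_of_eq_sum (hδ : IsLeftCoideal X δ) (r : H →ₗ[R] H →ₗ[R] R)
    (ν : X →ₐ[R] X) (b : n → X) {ι : Type*} [Fintype ι] {a : X} {h : ι → H} {x : ι → X}
    (ha : δ a = ∑ t, h t ⊗ₜ[R] x t) (k : n) :
    rDerivation δ r ν b a k =
      ∑ t, r (b k) (ν (x t)) • h t - Coalgebra.counit (R := R) (b k : H) • (a : H) := by
  rw [← hδ.slice_counit a, slice_apply_of_eq_sum _ ha, rDerivation, LinearMap.pi_apply,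
    slice_apply_of_eq_sum _ ha]
  simp [rFunctional, sub_smul, Finset.smul_sum, mul_smul]

theorem comul_rDerivation [Module.Flat R H] (hδ : IsLeftCoideal X δ) (b : n → X) (a : X) (k : n) :
    Coalgebra.comul (R := R) (rDerivation δ r ν b a k) =
      (LinearMap.proj k ∘ₗ rDerivation δ r ν b).lTensor H (δ a) :=
  hδ.comul_slice _ a

variable [Fintype n] {b : n → X} {ψ : Matrix n n H}

theorem coe_eq_sum_counit_smul (hδ : IsLeftCoideal X δ)
    (hb : ∀ i, δ (b i) = ∑ j, ψ i j ⊗ₜ[R] b j) (i : n) :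
    (b i : H) = ∑ j, Coalgebra.counit (R := R) (b j : H) • ψ i j := by
  rw [← hδ.slice_counit, slice_apply_of_eq_sum _ (hb i)]
  rfl

theorem rDerivation_vecMul_transpose_mem (hδ : IsLeftCoideal X δ) (hr : IsRightRForm r)
    (hb : ∀ i, δ (b i) = ∑ j, ψ i j ⊗ₜ[R] b j)
    (hν : ∀ a, δ (ν a) = ν.toLinearMap.lTensor H (δ a)) (a : X) (k : n) :
    (rDerivation δ r ν b a ᵥ* ψᵀ) k ∈ X := by
  obtain ⟨m, h, x, ha⟩ := (δ a).exists_sum_tmul_eq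
  have hcomm := hr.comm (b k) (ν a) n (Fin m) inferInstance inferInstance (ψ k) (fun j => b j) h
    (fun t => ν (x t)) (by rw [← hδ, hb]; simp) (by rw [← hδ, hν, ha]; simp)
  have hD : (rDerivation δ r ν b a ᵥ* ψᵀ) k =
      ∑ j, ∑ t, r (ψ k j) (h t) • ((b j : H) * ν (x t)) - (a : H) * b k := by
    rw [hcomm, hδ.coe_eq_sum_counit_smul hb k]
    simp [Matrix.vecMul, dotProduct, hδ.rDerivation_apply_of_eq_sum r ν b ha, sub_mul,
      Finset.sum_mul, Finset.mul_sum]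
  rw [hD]
  exact sub_mem (sum_mem fun j _ => sum_mem fun t _ => X.smul_mem (mul_mem (b j).2 (ν (x t)).2) _)
    (mul_mem a.2 (b k).2)

end IsLeftCoideal

variable [DecidableEq n] [Fintype n] {b : n → X} {ψ : Matrix n n H}

/-- The matrix coefficients of the representation `ρ(b) j k = r(u k j ⊗ b)` of `H` defined by
a matrix corepresentation `u`. -/
def IsRightRForm.matrixAlgHom (hr : IsRightRForm r) {u : Matrix n n H}
    (hu : IsMatrixCorep R u) : H →ₐ[R] Matrix n n R :=
  AlgHom.ofLinearMap
    { toFun := fun b => Matrix.of fun j k => r (u k j) b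
      map_add' := fun b c => by ext; simp
      map_smul' := fun t b => by ext; simp }
    (by ext; simp [hr.one_right, hu.counit_apply, Matrix.one_apply, eq_comm])
    (fun b c => by
      ext j k
      simp [Matrix.mul_apply, hr.mul_right _ b c n _ _ _ (hu.comul_apply k j), mul_comm])

theorem IsRightRForm.matrixAlgHom_apply (hr : IsRightRForm r) {u : Matrix n n H}
    (hu : IsMatrixCorep R u) (y : H) (j k : n) : hr.matrixAlgHom hu y j k = r (u k j) y :=
  rfl

namespace IsLeftCoideal

variable [Module.Flat R H]

/-- The algebra homomorphism `a ↦ a₍₁₎ L(a₍₂₎)`. -/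
noncomputable def sliceAlgHom (hδ : IsLeftCoideal X δ) (L : X →ₐ[R] Matrix n n R) :
    X →ₐ[R] Matrix n n H :=
  (matrixEquivTensor n R H).symm.toAlgHom.comp
    ((Algebra.TensorProduct.map (AlgHom.id R H) L).comp hδ.coactionAlgHom)

theorem sliceAlgHom_apply_of_eq_sum (hδ : IsLeftCoideal X δ) (L : X →ₐ[R] Matrix n n R)
    {ι : Type*} [Fintype ι] {a : X} {h : ι → H} {x : ι → X} (ha : δ a = ∑ t, h t ⊗ₜ[R] x t)
    (i j : n) : hδ.sliceAlgHom L a i j = ∑ t, L (x t) i j • h t := by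
  have ha' : hδ.coactionAlgHom a = ∑ t, h t ⊗ₜ[R] x t := ha
  simp [sliceAlgHom, ha', Matrix.sum_apply, Algebra.smul_def, Algebra.commutes]

theorem rDerivation_eq_sub (hδ : IsLeftCoideal X δ) (hr : IsRightRForm r)
    (hψ : IsMatrixCorep R ψ) (hb : ∀ i, δ (b i) = ∑ j, ψ i j ⊗ₜ[R] b j) (a : X) :
    rDerivation δ r ν b a =
      (fun j => algebraMap R H (Coalgebra.counit (b j : H))) ᵥ*
          hδ.sliceAlgHom ((hr.matrixAlgHom hψ).comp (X.val.comp ν)) a -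
        (a : H) • fun j => algebraMap R H (Coalgebra.counit (b j : H)) := by
  obtain ⟨m, h, x, ha⟩ := (δ a).exists_sum_tmul_eq
  ext k
  have hrb (y : H) : r (b k) y = ∑ j, Coalgebra.counit (R := R) (b j : H) * r (ψ k j) y := by
    conv_lhs => rw [hδ.coe_eq_sum_counit_smul hb k]
    simp
  rw [hδ.rDerivation_apply_of_eq_sum r ν b ha, Algebra.smul_def, Algebra.commutes]
  simp only [Pi.sub_apply, Pi.smul_apply, smul_eq_mul, Matrix.vecMul, dotProduct, AlgHom.comp_apply,
    sliceAlgHom_apply_of_eq_sum _ _ ha, hr.matrixAlgHom_apply, Subalgebra.coe_val, hrb,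
    ← Algebra.smul_def, Finset.sum_smul, Finset.smul_sum, mul_smul]
  rw [Finset.sum_comm]

theorem rDerivation_one (hδ : IsLeftCoideal X δ) (hr : IsRightRForm r)
    (hψ : IsMatrixCorep R ψ) (hb : ∀ i, δ (b i) = ∑ j, ψ i j ⊗ₜ[R] b j) :
    rDerivation δ r ν b 1 = 0 := by
  simp [hδ.rDerivation_eq_sub hr hψ hb]

theorem rDerivation_mul (hδ : IsLeftCoideal X δ) (hr : IsRightRForm r)
    (hψ : IsMatrixCorep R ψ) (hb : ∀ i, δ (b i) = ∑ j, ψ i j ⊗ₜ[R] b j) (a a' : X) :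
    rDerivation δ r ν b (a * a') =
      (a : H) • rDerivation δ r ν b a' +
        rDerivation δ r ν b a ᵥ* hδ.sliceAlgHom ((hr.matrixAlgHom hψ).comp (X.val.comp ν)) a' := by
  simp only [hδ.rDerivation_eq_sub hr hψ hb, map_mul, Matrix.sub_vecMul, Matrix.smul_vecMul,
    Matrix.vecMul_vecMul, smul_sub, MulMemClass.coe_mul, mul_smul]
  abel

end IsLeftCoideal

end InnerDerivation

section FreeDerivation

open scoped Matrix

variable {R A n : Type*} [CommRing R] [Ring A] [Algebra R A] [Fintype n] [DecidableEq n]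

/-- The matrix through which `b` has to act from the right on a free bimodule with left basis
`d (e l)`, as forced by the Leibniz rule `d (e l) * b = d (e l * b) - e l * d b`. -/
def twist (e : n → A) (d : A →ₗ[R] n → A) (b : A) : Matrix n n A :=
  Matrix.of fun l => d (e l * b) - e l • d b

/-- `d` consists of the coordinates, with respect to `d (e l)`, of the differential of a first
order calculus which is free as a left module with basis `d (e l)`. -/
structure IsFreeDerivation (e : n → A) (d : A →ₗ[R] n → A) : Prop where
  map_one : d 1 = 0
  map_basis (l : n) : d (e l) = Pi.single l 1
  map_mul (a b : A) : d (a * b) = a • d b + d a ᵥ* twist e d b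

namespace IsFreeDerivation

variable {e : n → A} {d : A →ₗ[R] n → A}

theorem sum_smul_map_basis (hd : IsFreeDerivation e d) (v : n → A) :
    ∑ i, v i • d (e i) = v := by
  ext
  simp [hd.map_basis, Pi.single_apply]

/-- The twist of a free derivation as a ring homomorphism. -/
def twistHom (hd : IsFreeDerivation e d) : A →+* Matrix n n A where
  toFun := twist e d
  map_one' := by
    ext l j
    simp [twist, hd.map_one, hd.map_basis, Matrix.one_apply, Pi.single_apply, eq_comm]
  map_mul' b c := by
    refine funext fun l => ?_
    change d (e l * (b * c)) - e l • d (b * c) = (d (e l * b) - e l • d b) ᵥ* twist e d c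
    rw [← mul_assoc, hd.map_mul (e l * b), hd.map_mul b, Matrix.sub_vecMul, Matrix.smul_vecMul,
      smul_add, mul_smul]
    abel
  map_zero' := by
    ext
    simp [twist]
  map_add' b c := by
    ext
    simp [twist, mul_add]
    abel

end IsFreeDerivation

/-- The free left module `n → A`, on which `b : A` acts from the right by the matrix `Φ b`. -/
def TwistedFree (_Φ : A →+* Matrix n n A) : Type _ :=
  n → A

namespace TwistedFree

variable (Φ : A →+* Matrix n n A)

instance : AddCommGroup (TwistedFree Φ) :=
  inferInstanceAs (AddCommGroup (n → A))

instance : Module R (TwistedFree Φ) :=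
  inferInstanceAs (Module R (n → A))

instance : Module A (TwistedFree Φ) :=
  inferInstanceAs (Module A (n → A))

instance : IsScalarTower R A (TwistedFree Φ) :=
  inferInstanceAs (IsScalarTower R A (n → A))

instance : Module Aᵐᵒᵖ (TwistedFree Φ) where
  smul b v := Matrix.vecMul v (Φ b.unop)
  one_smul v := (congrArg (Matrix.vecMul v) (map_one Φ)).trans (Matrix.vecMul_one _)
  mul_smul b c v := (congrArg (Matrix.vecMul v) (map_mul Φ c.unop b.unop)).trans
    (Matrix.vecMul_vecMul _ _ _).symm
  smul_zero _ := Matrix.zero_vecMul _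
  smul_add _ v w := Matrix.add_vecMul _ v w
  add_smul b c v := (congrArg (Matrix.vecMul v) (map_add Φ b.unop c.unop)).trans
    (Matrix.vecMul_add _ _ _)
  zero_smul v := (congrArg (Matrix.vecMul v) (map_zero Φ)).trans (Matrix.vecMul_zero _)

instance : SMulCommClass A Aᵐᵒᵖ (TwistedFree Φ) where
  smul_comm a b v := (Matrix.smul_vecMul a v (Φ b.unop)).symm

end TwistedFree

end FreeDerivation

section Normalization

open scoped Matrix

variable {R H n : Type*} [CommRing R] [Ring H] [Algebra R H] [Fintype n] {X : Subalgebra R H}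

/-- The map `a ↦ D a ᵥ* Q`, regarded as taking values in tuples of elements of `X`. -/
def normalizedDerivation (D : X →ₗ[R] n → H) (Q : Matrix n n H)
    (hD : ∀ a i, (D a ᵥ* Q) i ∈ X) : X →ₗ[R] n → X :=
  LinearMap.pi fun i =>
    (LinearMap.proj i ∘ₗ (Matrix.vecMulLinear Q).restrictScalars R ∘ₗ D).codRestrict
      (Subalgebra.toSubmodule X) fun a => hD a i

variable {D : X →ₗ[R] n → H} {Q : Matrix n n H}

theorem coe_normalizedDerivation_apply (hD : ∀ a i, (D a ᵥ* Q) i ∈ X) (a : X) (i : n) :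
    (normalizedDerivation D Q hD a i : H) = (D a ᵥ* Q) i :=
  rfl

variable [DecidableEq n]

theorem coe_normalizedDerivation_vecMul (hD : ∀ a i, (D a ᵥ* Q) i ∈ X) {P : Matrix n n H}
    (hQP : Q * P = 1) (a : X) :
    (fun i => (normalizedDerivation D Q hD a i : H)) ᵥ* P = D a := by
  simp only [coe_normalizedDerivation_apply, Matrix.vecMul_vecMul, hQP, Matrix.vecMul_one]

theorem isFreeDerivation_normalizedDerivation {e : n → X} (hD : ∀ a i, (D a ᵥ* Q) i ∈ X)
    (F : X → Matrix n n H) (map_one : D 1 = 0)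
    (map_mul : ∀ a b, D (a * b) = (a : H) • D b + D a ᵥ* F b)
    (hPQ : Matrix.of (fun l => D (e l)) * Q = 1) (hQP : Q * Matrix.of (fun l => D (e l)) = 1) :
    IsFreeDerivation e (normalizedDerivation D Q hD) where
  map_one := by
    ext i
    simp [coe_normalizedDerivation_apply, map_one]
  map_basis l := by
    ext i
    rw [coe_normalizedDerivation_apply]
    calc _ = (1 : Matrix n n H) l i := congrFun₂ hPQ l i
      _ = _ := by obtain rfl | hli := eq_or_ne l i <;> simp [*]
  map_mul a b := by
    set P : Matrix n n H := Matrix.of fun l => D (e l)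
    have htwist : (twist e (normalizedDerivation D Q hD) b).map X.val = P * F b * Q := by
      ext l i
      calc _ = ((D (e l * b) - (e l : H) • D b) ᵥ* Q) i := by
            simp [twist, coe_normalizedDerivation_apply, Matrix.sub_vecMul, Matrix.smul_vecMul]
        _ = (D (e l) ᵥ* F b ᵥ* Q) i := by rw [map_mul, add_sub_cancel_left]
        _ = (P * F b * Q) l i := rfl
    ext i
    have hright : X.val ((normalizedDerivation D Q hD a ᵥ*
        twist e (normalizedDerivation D Q hD) b) i) = (D a ᵥ* F b ᵥ* Q) i := by
      calc _ = (D a ᵥ* Q ᵥ* (P * F b * Q)) i := by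
            rw [← htwist]
            exact RingHom.map_vecMul X.val.toRingHom _ _ i
        _ = (D a ᵥ* (Q * P * F b * Q)) i := by simp only [Matrix.vecMul_vecMul, mul_assoc]
        _ = _ := by rw [hQP, one_mul, Matrix.vecMul_vecMul]
    rw [Pi.add_apply, Subalgebra.coe_add, coe_normalizedDerivation_apply, map_mul,
      Matrix.add_vecMul, Pi.add_apply, ← hright, Matrix.smul_vecMul]
    rfl

end Normalization

section Covariance

open scoped Matrix

variable {R H n : Type*} [CommRing R] [Ring H] [Bialgebra R H] [Fintype n] {X : Subalgebra R H}
  {δ : X →ₗ[R] H ⊗[R] X}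

/-- The coefficients `d` of a differential with respect to a left basis that transforms under
the matrix `π` commute with the coactions: `∑ i, δ(d b i) (π i j ⊗ 1) = b₍₁₎ ⊗ d b₍₂₎ j`. -/
def IsCovariantDerivation (δ : X →ₗ[R] H ⊗[R] X) (π : Matrix n n H) (d : X →ₗ[R] n → X) : Prop :=
  ∀ b j, ∑ i, δ (d b i) * π i j ⊗ₜ[R] 1 = (LinearMap.proj j ∘ₗ d).lTensor H (δ b)

theorem lTensor_vecMul_includeRight {V : Type*} [AddCommGroup V] [Module R V]
    (f : V →ₗ[R] n → H) (P : Matrix n n H) (z : H ⊗[R] V) :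
    (fun j => (LinearMap.proj j ∘ₗ f).lTensor H z) ᵥ*
        P.map (Algebra.TensorProduct.includeRight (R := R) (A := H)) =
      fun k =>
        (LinearMap.proj k ∘ₗ (Matrix.vecMulLinear P).restrictScalars R ∘ₗ f).lTensor H z := by
  ext k
  induction z with
  | zero => simp [Matrix.vecMul, dotProduct]
  | tmul h v => simp [Matrix.vecMul, dotProduct, TensorProduct.tmul_sum]
  | add z w hz hw =>
    simp only [Matrix.vecMul, dotProduct, map_add, add_mul, Finset.sum_add_distrib] at hz hw ⊢
    rw [hz, hw]

theorem comul_vecMul_includeLeft [DecidableEq n] {V : Type*} [AddCommGroup V] [Module R V]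
    {ρ : V →ₗ[R] H ⊗[R] V} {π P Q : Matrix n n H} (hPQ : P * Q = 1)
    (comul_P : ∀ i k, Coalgebra.comul (R := R) (P i k) = ∑ j, π i j ⊗ₜ[R] P j k)
    {f : V →ₗ[R] n → H}
    (comul_f : ∀ v k, Coalgebra.comul (R := R) ((f v ᵥ* P) k) =
      (LinearMap.proj k ∘ₗ (Matrix.vecMulLinear P).restrictScalars R ∘ₗ f).lTensor H (ρ v))
    (v : V) :
    (Bialgebra.comulAlgHom R H ∘ f v) ᵥ* π.map (Algebra.TensorProduct.includeLeft (S := R)) =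
      fun j => (LinearMap.proj j ∘ₗ f).lTensor H (ρ v) := by
  set Δ := Bialgebra.comulAlgHom R H
  set P' : Matrix n n (H ⊗[R] H) := P.map Algebra.TensorProduct.includeRight
  have hPQ' : P' * Q.map Algebra.TensorProduct.includeRight = 1 := by
    rw [← Matrix.map_mul, hPQ, Matrix.map_one _ (map_zero _) (map_one _)]
  have hπP : π.map (Algebra.TensorProduct.includeLeft (S := R)) * P' = P.map Δ := by
    ext i k
    simp [Δ, P', Matrix.mul_apply, comul_P]
  -- `P' = 1 ⊗ P` cancels.
  suffices (Δ ∘ f v) ᵥ* π.map (Algebra.TensorProduct.includeLeft (S := R)) ᵥ* P' =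
      (fun j => (LinearMap.proj j ∘ₗ f).lTensor H (ρ v)) ᵥ* P' by
    simpa only [Matrix.vecMul_vecMul, mul_assoc, hPQ', mul_one, Matrix.vecMul_one] using
      congrArg (· ᵥ* Q.map Algebra.TensorProduct.includeRight) this
  calc _ = fun k => Δ ((f v ᵥ* P) k) := by
        rw [Matrix.vecMul_vecMul, hπP]
        exact funext fun k => (RingHom.map_vecMul Δ.toRingHom P _ k).symm
    _ = _ := by
        rw [lTensor_vecMul_includeRight]
        exact funext fun k => comul_f v k

variable [Module.Flat R H] {π Q : Matrix n n H} {D : X →ₗ[R] n → H} {e : n → X}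

theorem IsLeftCoideal.isCovariantDerivation_normalizedDerivation [DecidableEq n]
    (hδ : IsLeftCoideal X δ) (he : ∀ i, δ (e i) = ∑ j, π i j ⊗ₜ[R] e j)
    (hD : ∀ a i, (D a ᵥ* Q) i ∈ X)
    (comul_D : ∀ a k, Coalgebra.comul (R := R) (D a k) = (LinearMap.proj k ∘ₗ D).lTensor H (δ a))
    (hPQ : Matrix.of (fun l => D (e l)) * Q = 1) (hQP : Q * Matrix.of (fun l => D (e l)) = 1) :
    IsCovariantDerivation δ π (normalizedDerivation D Q hD) := by
  set P : Matrix n n H := Matrix.of fun l => D (e l)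
  set d := normalizedDerivation D Q hD
  let f : X →ₗ[R] n → H := X.val.toLinearMap.compLeft n ∘ₗ d
  have hf : (Matrix.vecMulLinear P).restrictScalars R ∘ₗ f = D :=
    LinearMap.ext fun a => coe_normalizedDerivation_vecMul hD hQP a
  have comul_P (i k : n) : Coalgebra.comul (R := R) (P i k) = ∑ j, π i j ⊗ₜ[R] P j k := by
    simp [P, comul_D, he]
  have comul_f (a : X) (k : n) : Coalgebra.comul (R := R) ((f a ᵥ* P) k) =
      (LinearMap.proj k ∘ₗ (Matrix.vecMulLinear P).restrictScalars R ∘ₗ f).lTensor H (δ a) := by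
    rw [hf, ← comul_D, ← hf]
    rfl
  refine fun b j => IsLeftCoideal.injective_map_val X ?_
  calc _ = ((Bialgebra.comulAlgHom R H ∘ f b) ᵥ*
          π.map (Algebra.TensorProduct.includeLeft (S := R))) j := by
        simp [Matrix.vecMul, dotProduct, hδ.map_val_apply, f]
    _ = (LinearMap.proj j ∘ₗ f).lTensor H (δ b) :=
        congrFun (comul_vecMul_includeLeft hPQ comul_P comul_f b) j
    _ = X.val.toLinearMap.lTensor H ((LinearMap.proj j ∘ₗ d).lTensor H (δ b)) := by
        rw [← LinearMap.lTensor_comp_apply]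
        rfl

end Covariance

section FreeCoaction

variable {R H n : Type*} [CommRing R] [Ring H] [Bialgebra R H] [Fintype n] [DecidableEq n]
  {X : Subalgebra R H} {δ : X →ₗ[R] H ⊗[R] X}

/-- The left coaction on the free module `n → X` with respect to which its basis transforms under
the matrix `π`. -/
noncomputable def freeCoaction (δ : X →ₗ[R] H ⊗[R] X) (π : Matrix n n H) :
    (n → X) →ₗ[R] H ⊗[R] (n → X) :=
  ∑ j, (LinearMap.single R (fun _ => X) j).lTensor H ∘ₗ
    ∑ i, LinearMap.mulRight R (π i j ⊗ₜ[R] (1 : X)) ∘ₗ δ ∘ₗ LinearMap.proj i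

theorem IsCovariantDerivation.freeCoaction_smul [Module.Flat R H] {π : Matrix n n H}
    {d : X →ₗ[R] n → X} (hd : IsCovariantDerivation δ π d) (hδ : IsLeftCoideal X δ) {a b : X}
    {ι κ : Type*} [Fintype ι] [Fintype κ] {a1 : ι → H} {a2 : ι → X} {b1 : κ → H} {b2 : κ → X}
    (ha : δ a = ∑ t, a1 t ⊗ₜ[R] a2 t) (hb : δ b = ∑ s, b1 s ⊗ₜ[R] b2 s) :
    freeCoaction δ π (a • d b) = ∑ t, ∑ s, (a1 t * b1 s) ⊗ₜ[R] (a2 t • d (b2 s)) := by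
  have hcoeff (j : n) : ∑ i, δ (a * d b i) * π i j ⊗ₜ[R] (1 : X) =
      ∑ t, ∑ s, (a1 t * b1 s) ⊗ₜ[R] (a2 t * d (b2 s) j) := by
    calc _ = δ a * ∑ i, δ (d b i) * π i j ⊗ₜ[R] (1 : X) := by
          rw [Finset.mul_sum]
          exact Finset.sum_congr rfl fun i _ => by
            rw [← mul_assoc]
            exact congrArg (· * _) (map_mul hδ.coactionAlgHom a (d b i))
      _ = _ := by simp [hd b j, ha, hb, Finset.sum_mul_sum]
  calc freeCoaction δ π (a • d b)
      = ∑ j, ∑ t, ∑ s, (a1 t * b1 s) ⊗ₜ[R] Pi.single j (a2 t * d (b2 s) j) := by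
        simp [freeCoaction, hcoeff]
    _ = ∑ t, ∑ s, (a1 t * b1 s) ⊗ₜ[R] ∑ j, Pi.single j (a2 t * d (b2 s) j) := by
        simp only [TensorProduct.tmul_sum]
        exact Finset.sum_comm_cycle.symm
    _ = _ := by
        simp only [← smul_eq_mul, ← Pi.smul_apply, Finset.univ_sum_single]

end FreeCoaction

section Calculus

variable {H : Type} [Ring H] [HopfAlgebra ℂ H] {X : Subalgebra ℂ H} {δ : X →ₗ[ℂ] H ⊗[ℂ] X}
  {M : ℕ} {e : Fin M → X} {π : Matrix (Fin M) (Fin M) H} {d : X →ₗ[ℂ] Fin M → X}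

/-- The calculus on `TwistedFree hd.twistHom` with differential `d`. -/
noncomputable def IsCovariantDerivation.calculus (hcov : IsCovariantDerivation δ π d)
    (hδ : IsLeftCoideal X δ) (hd : IsFreeDerivation e d) : CovCalc X δ e where
  Γ := TwistedFree hd.twistHom
  tower := inferInstanceAs (IsScalarTower ℂ X (Fin M → X))
  d := d
  leibniz := hd.map_mul
  spanning := by
    refine Submodule.eq_top_iff'.mpr fun v => ?_
    rw [← show ∑ i, v i • d (e i) = v from hd.sum_smul_map_basis v]
    exact Submodule.sum_mem _ fun i _ => Submodule.subset_span ⟨v i, e i, rfl⟩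
  free v :=
    ⟨v, (hd.sum_smul_map_basis v).symm, fun c hc => (hc.trans (hd.sum_smul_map_basis c)).symm⟩
  covariant := ⟨freeCoaction δ π, fun _ _ _ _ _ _ _ _ _ _ ha hb => hcov.freeCoaction_smul hδ ha hb⟩

namespace CovCalc

/-- The left basis `d (e i)` of a free calculus, used to read off coefficients of differentials. -/
noncomputable def basis (c : CovCalc X δ e) : Module.Basis (Fin M) X c.Γ :=
  .ofEquivFun <| .symm <|
    LinearEquiv.ofBijective (Fintype.linearCombination X fun i => c.d (e i)) <|
      (Function.bijective_iff_existsUnique _).mpr <| by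
        simpa only [Fintype.linearCombination_apply, eq_comm] using c.free

theorem basis_apply (c : CovCalc X δ e) (i : Fin M) : c.basis i = c.d (e i) := by
  simp [basis]

theorem iso_of_equivFun_eq {c c' : CovCalc X δ e}
    (h : ∀ a, c.basis.equivFun (c.d a) = c'.basis.equivFun (c'.d a)) : c.Iso c' := by
  let φ : c.Γ ≃ₗ[X] c'.Γ := c.basis.equivFun ≪≫ₗ c'.basis.equivFun.symm
  have hφ (a : X) : φ (c.d a) = c'.d a :=
    c'.basis.equivFun.symm_apply_eq.mpr (h a)
  refine ⟨φ.restrictScalars ℂ, hφ, φ.map_smul, fun b x => ?_⟩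
  have hop (c : CovCalc X δ e) (a : X) : op b • c.d a = c.d (a * b) - a • c.d b := by
    rw [c.leibniz, add_sub_cancel_left]
  have (c : CovCalc X δ e) : SMulCommClass Xᵐᵒᵖ X c.Γ := .symm _ _ _
  suffices φ.toLinearMap ∘ₗ DistribSMul.toLinearMap X _ (op b) =
      DistribSMul.toLinearMap X _ (op b) ∘ₗ φ.toLinearMap from LinearMap.congr_fun this x
  refine c.basis.ext fun i => ?_
  simp [basis_apply, hop, hφ]

end CovCalc

theorem IsCovariantDerivation.basis_equivFun_calculus (hcov : IsCovariantDerivation δ π d)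
    (hδ : IsLeftCoideal X δ) (hd : IsFreeDerivation e d) (a : X) :
    (hcov.calculus hδ hd).basis.equivFun ((hcov.calculus hδ hd).d a) = d a := by
  rw [← LinearEquiv.eq_symm_apply, Module.Basis.equivFun_symm_apply]
  simp only [CovCalc.basis_apply]
  exact (hd.sum_smul_map_basis (d a)).symm

end Calculus

section Normalizer

open scoped Matrix

variable {R H : Type*} [CommRing R] [Ring H] [HopfAlgebra R H] {X : Subalgebra R H}
  {δ : X →ₗ[R] H ⊗[R] X} {r : H →ₗ[R] H →ₗ[R] R} {ν : X →ₐ[R] X} {n : Type} {b e : n → X}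
  {π ψ : Matrix n n H} {c : Matrix n n R}

/-- The matrix `χ^{ij} = χ^i(e^j)`, whose invertibility makes the `d e^j` a left basis. -/
noncomputable def rMatrix (r : H →ₗ[R] H →ₗ[R] R) (ν : X →ₐ[R] X) (b e : n → X) : Matrix n n R :=
  Matrix.of fun i j => rFunctional r ν (b i) (e j)

variable [Fintype n]

/-- The matrix with entry `∑ j, c j k * S(π j i)` at `k i`, which turns `rDerivation` into the
partial derivatives when `c` is the inverse of `χ`. -/
noncomputable def normalizer (π : Matrix n n H) (c : Matrix n n R) : Matrix n n H :=
  cᵀ.map (algebraMap R H) * π.map (HopfAlgebra.antipode R)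

/-- The partial derivatives `∂_i(a) = a₍₁₎ χ^k(a₍₂₎) c_{jk} S(π^j_i)`. -/
noncomputable def rPartials (δ : X →ₗ[R] H ⊗[R] X) (r : H →ₗ[R] H →ₗ[R] R) (ν : X →ₐ[R] X)
    (b : n → X) (π : Matrix n n H) (c : Matrix n n R) (a : X) : n → H :=
  rDerivation δ r ν b a ᵥ* normalizer π c

theorem rPartials_apply_of_eq_sum {ι : Type*} [Fintype ι] {a : X} {h : ι → H} {x : ι → X}
    (ha : δ a = ∑ t, h t ⊗ₜ[R] x t) (i : n) :
    rPartials δ r ν b π c a i =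
      ∑ t, ∑ j, ∑ k, (rFunctional r ν (b k) (x t) * c j k) •
        (h t * HopfAlgebra.antipode R (π j i)) := by
  simp only [rPartials, normalizer, rDerivation, Matrix.vecMul, dotProduct, LinearMap.pi_apply,
    slice_apply_of_eq_sum _ ha, Matrix.mul_apply, Matrix.map_apply, Matrix.transpose_apply,
    ← Algebra.smul_def, Finset.sum_mul_sum, smul_mul_smul_comm]
  rw [Finset.sum_comm]
  exact Finset.sum_congr rfl fun t _ => Finset.sum_comm

theorem of_rDerivation_eq_mul (he : ∀ i, δ (e i) = ∑ j, π i j ⊗ₜ[R] e j) :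
    Matrix.of (fun l => rDerivation δ r ν b (e l)) =
      π * (rMatrix r ν b e)ᵀ.map (algebraMap R H) := by
  ext l k
  simp [rDerivation, slice_apply_of_eq_sum _ (he l), Matrix.mul_apply, rMatrix, Algebra.smul_def,
    Algebra.commutes]

variable [DecidableEq n]

theorem of_rDerivation_mul_normalizer (he : ∀ i, δ (e i) = ∑ j, π i j ⊗ₜ[R] e j)
    (hπ : IsMatrixCorep R π) (hc : c * rMatrix r ν b e = 1) :
    Matrix.of (fun l => rDerivation δ r ν b (e l)) * normalizer π c = 1 := by
  have h : (rMatrix r ν b e)ᵀ.map (algebraMap R H) * cᵀ.map (algebraMap R H) = 1 := by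
    rw [← Matrix.map_mul, ← Matrix.transpose_mul, hc, Matrix.transpose_one,
      Matrix.map_one _ (map_zero _) (map_one _)]
  rw [of_rDerivation_eq_mul he, normalizer, mul_assoc, ← mul_assoc (Matrix.map _ _), h, one_mul,
    hπ.mul_antipode]

theorem normalizer_mul_of_rDerivation (he : ∀ i, δ (e i) = ∑ j, π i j ⊗ₜ[R] e j)
    (hπ : IsMatrixCorep R π) (hc : c * rMatrix r ν b e = 1) :
    normalizer π c * Matrix.of (fun l => rDerivation δ r ν b (e l)) = 1 := by
  have h : cᵀ.map (algebraMap R H) * (rMatrix r ν b e)ᵀ.map (algebraMap R H) = 1 := by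
    rw [← Matrix.map_mul, ← Matrix.transpose_mul, mul_eq_one_comm.mp hc, Matrix.transpose_one,
      Matrix.map_one _ (map_zero _) (map_one _)]
  rw [of_rDerivation_eq_mul he, normalizer, mul_assoc, ← mul_assoc (Matrix.map _ _) π,
    hπ.antipode_mul, one_mul, h]

namespace IsLeftCoideal

theorem rDerivation_vecMul_mem (hδ : IsLeftCoideal X δ) (hr : IsRightRForm r)
    (hψ : IsMatrixCorep R ψ) (hb : ∀ i, δ (b i) = ∑ j, ψ i j ⊗ₜ[R] b j)
    (hν : ∀ a, δ (ν a) = ν.toLinearMap.lTensor H (δ a))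
    (hX : ∀ x y : Matrix n n H, (∀ i j, x i j ∈ X) → x * y = 1 → y * x = 1 → ∀ i j, y i j ∈ X)
    {Q : Matrix n n H} (hPQ : Matrix.of (fun l => rDerivation δ r ν b (e l)) * Q = 1)
    (hQP : Q * Matrix.of (fun l => rDerivation δ r ν b (e l)) = 1) (a : X) (i : n) :
    (rDerivation δ r ν b a ᵥ* Q) i ∈ X := by
  obtain ⟨w, hψw, hwψ⟩ := isUnit_iff_exists.mp <| hr.isUnit_transpose hψ
  -- `P` itself may have entries outside `X`, so the closure property is applied to `P ψᵀ`.
  have hPψ (l k : n) :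
      (Matrix.of (fun l => rDerivation δ r ν b (e l)) * ψᵀ) l k ∈ X :=
    hδ.rDerivation_vecMul_transpose_mem hr hb hν (e l) k
  have hwQ (k i : n) : (w * Q) k i ∈ X := by
    refine hX _ (w * Q) hPψ ?_ ?_ k i
    · rw [mul_assoc, ← mul_assoc ψᵀ, hψw, one_mul, hPQ]
    · rw [mul_assoc, ← mul_assoc Q, hQP, one_mul, hwψ]
  have hfactor : rDerivation δ r ν b a ᵥ* Q = rDerivation δ r ν b a ᵥ* ψᵀ ᵥ* (w * Q) := by
    rw [Matrix.vecMul_vecMul, ← mul_assoc, hψw, one_mul]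
  rw [hfactor]
  exact sum_mem fun k _ => mul_mem (hδ.rDerivation_vecMul_transpose_mem hr hb hν a k) (hwQ k i)

end IsLeftCoideal

end Normalizer

section Main

open scoped Matrix

variable {H : Type} [Ring H] [HopfAlgebra ℂ H] {X : Subalgebra ℂ H} {δ : X →ₗ[ℂ] H ⊗[ℂ] X}
  {M : ℕ} {e b : Fin M → X} {π : Matrix (Fin M) (Fin M) H} {r : H →ₗ[ℂ] H →ₗ[ℂ] ℂ} {ν : X →ₐ[ℂ] X}
  {χinv : Matrix (Fin M) (Fin M) ℂ}

/-- The tuple `D` consists of the coefficients of the differential of `c` in the left basis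
`d (e i)`. -/
def CovCalc.HasPartials (c : CovCalc X δ e) (D : X → Fin M → H) : Prop :=
  ∀ a i, (c.basis.equivFun (c.d a) i : H) = D a i

namespace CovCalc

theorem HasPartials.iso {c c' : CovCalc X δ e} {D : X → Fin M → H} (h : c.HasPartials D)
    (h' : c'.HasPartials D) : c.Iso c' :=
  iso_of_equivFun_eq fun a => funext fun i => Subtype.ext ((h a i).trans (h' a i).symm)

theorem hasPartials_rPartials_iff (c : CovCalc X δ e) (r : H →ₗ[ℂ] H →ₗ[ℂ] ℂ) (ν : X →ₐ[ℂ] X)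
    (b : Fin M → X) (π : Matrix (Fin M) (Fin M) H) (χinv : Matrix (Fin M) (Fin M) ℂ) :
    c.HasPartials (rPartials δ r ν b π χinv) ↔
      ∀ (a : X) (co : Fin M → X), c.d a = ∑ i, co i • c.d (e i) →
        ∀ (i : Fin M) (ι : Type) (_ : Fintype ι) (a1 : ι → H) (a2 : ι → X),
          δ a = ∑ t, a1 t ⊗ₜ[ℂ] a2 t →
          (co i : H) = ∑ t, ∑ j, ∑ k, (rFunctional r ν (b k) (a2 t) * χinv j k) •
            (a1 t * HopfAlgebra.antipode (R := ℂ) (π j i)) := by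
  have hco (a : X) (co : Fin M → X) :
      c.d a = ∑ i, co i • c.d (e i) ↔ co = c.basis.equivFun (c.d a) := by
    rw [← LinearEquiv.symm_apply_eq, c.basis.equivFun_symm_apply, eq_comm]
    simp only [c.basis_apply]
  simp only [hco, forall_eq]
  refine forall₂_congr fun a i => ⟨fun h ι _ a1 a2 ha => ?_, fun h => ?_⟩
  · exact h.trans (rPartials_apply_of_eq_sum ha i)
  · obtain ⟨m, a1, a2, ha⟩ := (δ a).exists_sum_tmul_eq
    exact (h (Fin m) _ a1 a2 ha).trans (rPartials_apply_of_eq_sum ha i).symm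

end CovCalc

theorem stmt15_general {ψ : Matrix (Fin M) (Fin M) H} (hr : IsRightRForm r) (hδ : IsLeftCoideal X δ)
    (hX : ∀ x y : Matrix (Fin M) (Fin M) H,
      (∀ i j, x i j ∈ X) → x * y = 1 → y * x = 1 → ∀ i j, y i j ∈ X)
    (he : ∀ i, δ (e i) = ∑ j, π i j ⊗ₜ[ℂ] e j) (hπ : IsMatrixCorep ℂ π)
    (hb : ∀ i, δ (b i) = ∑ j, ψ i j ⊗ₜ[ℂ] b j) (hψ : IsMatrixCorep ℂ ψ)
    (hν : ∀ a, δ (ν a) = ν.toLinearMap.lTensor H (δ a))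
    (hχ : χinv * rMatrix r ν b e = 1) :
    (∃ c : CovCalc X δ e, c.HasPartials (rPartials δ r ν b π χinv)) ∧
    (∀ c c' : CovCalc X δ e, c.HasPartials (rPartials δ r ν b π χinv) →
      c'.HasPartials (rPartials δ r ν b π χinv) → c.Iso c') := by
  refine ⟨?_, fun c c' h h' => h.iso h'⟩
  have hPQ := of_rDerivation_mul_normalizer he hπ hχ
  have hQP := normalizer_mul_of_rDerivation he hπ hχ
  have hD := hδ.rDerivation_vecMul_mem hr hψ hb hν hX hPQ hQP
  have hcov := hδ.isCovariantDerivation_normalizedDerivation he hD (hδ.comul_rDerivation b) hPQ hQP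
  have hd := isFreeDerivation_normalizedDerivation hD _ (hδ.rDerivation_one hr hψ hb)
    (hδ.rDerivation_mul hr hψ hb) hPQ hQP
  refine ⟨hcov.calculus hδ hd, fun a i => ?_⟩
  rw [hcov.basis_equivFun_calculus]
  rfl

end Main

/-- construction theorem: under the hypotheses there exists, uniquely up
to isomorphism, a covariant free first order differential calculus on `X` with
`d a = ∂_i(a) d e^i`, `∂_i(a) = a₍₁₎ χ^k(a₍₂₎) (χ⁻¹)_{jk} S(π^j_i)`. -/
theorem stmt15
    {H : Type} [Ring H] [HopfAlgebra ℂ H]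
    -- universal r-form
    (r : H →ₗ[ℂ] H →ₗ[ℂ] ℂ)
    (hr1 : ∀ (a b : H) (ι κ : Type) (_ : Fintype ι) (_ : Fintype κ)
      (a1 a2 : ι → H) (b1 b2 : κ → H),
      Coalgebra.comul (R := ℂ) a = ∑ t, a1 t ⊗ₜ[ℂ] a2 t →
      Coalgebra.comul (R := ℂ) b = ∑ s, b1 s ⊗ₜ[ℂ] b2 s →
      ∑ t, ∑ s, r (a1 t) (b1 s) • (a2 t * b2 s)
        = ∑ t, ∑ s, r (a2 t) (b2 s) • (b1 s * a1 t))
    (hr2 : ∀ (a b c : H) (κ : Type) (_ : Fintype κ) (c1 c2 : κ → H),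
      Coalgebra.comul (R := ℂ) c = ∑ s, c1 s ⊗ₜ[ℂ] c2 s →
      r (a * b) c = ∑ s, r a (c1 s) * r b (c2 s))
    (hr2' : ∀ c : H, r 1 c = Coalgebra.counit (R := ℂ) c)
    (hr3 : ∀ (a b c : H) (ι : Type) (_ : Fintype ι) (a1 a2 : ι → H),
      Coalgebra.comul (R := ℂ) a = ∑ t, a1 t ⊗ₜ[ℂ] a2 t →
      r a (b * c) = ∑ t, r (a1 t) c * r (a2 t) b)
    (hr3' : ∀ a : H, r a 1 = Coalgebra.counit (R := ℂ) a)
    -- X: a left coideal subalgebra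
    (X : Subalgebra ℂ H)
    (comulX : X →ₗ[ℂ] H ⊗[ℂ] X)
    (hcomulX : ∀ a : X,
      (TensorProduct.map (LinearMap.id) X.val.toLinearMap) (comulX a)
        = Coalgebra.comul (R := ℂ) (a : H))
    -- invertibility-closure property of X
    (hclosure : ∀ (n : ℕ) (x y : Fin n → Fin n → H),
      (∀ i j, x i j ∈ X) →
      (∀ i j, ∑ k, x i k * y k j = if i = j then (1 : H) else 0) →
      (∀ i j, ∑ k, y i k * x k j = if i = j then (1 : H) else 0) →
      ∀ i j, y i j ∈ X)
    -- e^i and b^i with their matrix coefficients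
    {M : ℕ} (e bb : Fin M → X) (π ψ : Fin M → Fin M → H)
    (hπ : ∀ i, comulX (e i) = ∑ j, π i j ⊗ₜ[ℂ] e j)
    (hΔπ : ∀ i j, Coalgebra.comul (R := ℂ) (π i j) = ∑ k, π i k ⊗ₜ[ℂ] π k j)
    (hεπ : ∀ i j, Coalgebra.counit (R := ℂ) (π i j) = if i = j then 1 else 0)
    (hψ : ∀ i, comulX (bb i) = ∑ j, ψ i j ⊗ₜ[ℂ] bb j)
    (hΔψ : ∀ i j, Coalgebra.comul (R := ℂ) (ψ i j) = ∑ k, ψ i k ⊗ₜ[ℂ] ψ k j)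
    (hεψ : ∀ i j, Coalgebra.counit (R := ℂ) (ψ i j) = if i = j then 1 else 0)
    -- covariant algebra endomorphism ν of X
    (ν : X →ₐ[ℂ] X)
    (hν : ∀ a : X, comulX (ν a) = (TensorProduct.map LinearMap.id ν.toLinearMap) (comulX a))
    -- the functionals χ^i and the invertible matrix χ
    (χ : Fin M → X → ℂ)
    (hχ : ∀ i (a : X), χ i a =
      r ((bb i : H)) ((ν a : H))
        - Coalgebra.counit (R := ℂ) ((bb i : H)) * Coalgebra.counit (R := ℂ) ((a : H)))
    (χinv : Fin M → Fin M → ℂ)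
    (hχinv1 : ∀ i j, ∑ k, χ i (e k) * χinv k j = if i = j then 1 else 0)
    (hχinv2 : ∀ i j, ∑ k, χinv i k * χ k (e j) = if i = j then 1 else 0)
    :
    -- `DFormula c`: the coefficients of d are given by the stated formula for ∂_i
    ∀ DFormula : CovCalc X comulX e → Prop,
    (∀ c, DFormula c ↔
      ∀ (a : X) (co : Fin M → X), c.d a = ∑ i, co i • c.d (e i) →
        ∀ (i : Fin M) (ι : Type) (_ : Fintype ι) (a1 : ι → H) (a2 : ι → X),
          comulX a = ∑ t, a1 t ⊗ₜ[ℂ] a2 t →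
          ((co i : H)) = ∑ t, ∑ j, ∑ k, (χ k (a2 t) * χinv j k) •
            (a1 t * HopfAlgebra.antipode (R := ℂ) (π j i))) →
    -- existence and uniqueness up to isomorphism
    (∃ c : CovCalc X comulX e, DFormula c) ∧
    (∀ c c' : CovCalc X comulX e, DFormula c → DFormula c' → c.Iso c') := by
  intro DFormula hDF
  obtain rfl : χ = fun i a => rFunctional r ν (bb i) a := funext fun i => funext (hχ i)
  obtain rfl : DFormula = fun c => c.HasPartials (rPartials comulX r ν bb π χinv) :=
    funext fun c => propext ((hDF c).trans (c.hasPartials_rPartials_iff r ν bb π χinv).symm)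
  exact stmt15_general ⟨hr1, hr3, hr3'⟩ hcomulX
    (fun x y hx hxy hyx => hclosure M x y hx (congrFun₂ hxy) (congrFun₂ hyx))
    hπ ⟨hΔπ, hεπ⟩ hψ ⟨hΔψ, hεψ⟩ hν (Matrix.ext hχinv2)
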